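/- Let U be a nonempty bounded balanced open subset of a complex Banach space E. Then for every n ∈ ℕ one has (n/(n+1))·Û_P ⊆ ((n/(n+1))·U)̂_P, and the sets ((n/(n+1))·U)̂_P form a fundamental system of Û_P-bounded sets: every Û_P-bounded set is contained in ((n/(n+1))·U)̂_P for some n. -/

import Mathlib

/-!
Continuous polynomials are stable under precomposition with a dilation `x ↦ c • x`. Hence
`c • polyHull A ⊆ polyHull (c • A)`, and since each `U_n` lies in `U`, dilating `Û_P` by any scalar
lands in the hull of the dilated `U`. Conversely, if `A` is bounded and stays at distance `d` from
the complement of `Û_P`, then for large `n` the point `((n+1)/n) • a`, at distance `‖a‖/n < d` from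
`a`, is still in `Û_P`; multiplying back by `n/(n+1)` puts `a` in the hull of `(n/(n+1)) • U`.
-/

open Set Metric Pointwise

variable {E : Type*} [NormedAddCommGroup E] [NormedSpace ℂ E]

/-- A continuous `n`-homogeneous polynomial: `x ↦ M (x, …, x)` for a continuous `n`-linear map. -/
def IsHomogPoly (n : ℕ) (Q : E → ℂ) : Prop :=
  ∃ M : ContinuousMultilinearMap ℂ (fun _ : Fin n => E) ℂ, ∀ x, Q x = M fun _ => x

/-- A continuous polynomial: a finite sum of continuous homogeneous polynomials. -/
def IsContPoly (P : E → ℂ) : Prop :=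
  ∃ (N : ℕ) (Q : ℕ → E → ℂ), (∀ k, IsHomogPoly k (Q k)) ∧
    ∀ x, P x = ∑ k ∈ Finset.range (N + 1), Q k x

/-- `A` is `U`-bounded: contained in `U`, norm bounded, uniformly away from the boundary. -/
def UBounded (U A : Set E) : Prop :=
  A ⊆ U ∧ Bornology.IsBounded A ∧ ∃ d > 0, ∀ a ∈ A, ball a d ⊆ U

/-- `f` is in `H_b(U)`: analytic on `U` and bounded on every `U`-bounded set. -/
def MemHb (U : Set E) (f : E → ℂ) : Prop :=
  AnalyticOnNhd ℂ f U ∧ ∀ A : Set E, UBounded U A → ∃ C : ℝ, ∀ x ∈ A, ‖f x‖ ≤ C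

/-- Polynomial hull `Â_P` of a set `A`: points where each continuous polynomial is dominated by
its sup over `A` (formulated via upper bounds). -/
def polyHull (A : Set E) : Set E :=
  {x | ∀ P : E → ℂ, IsContPoly P → ∀ C : ℝ, (∀ a ∈ A, ‖P a‖ ≤ C) → ‖P x‖ ≤ C}

/-- The set `U_n = {x ∈ U : ‖x‖ ≤ n, ball x (1/n) ⊆ U}`. -/
def UNat (U : Set E) (n : ℕ) : Set E :=
  {x | x ∈ U ∧ ‖x‖ ≤ (n : ℝ) ∧ ball x (1 / (n : ℝ)) ⊆ U}

/-- `Û_P := ⋃ n, (U_n)̂_P`. -/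
def UhatP (U : Set E) : Set E := ⋃ n : ℕ, polyHull (UNat U n)

/-- A continuous character of `H_b(U)`. -/
def IsHbChar (U : Set E) (φ : (E → ℂ) → ℂ) : Prop :=
  φ (fun _ => 1) = 1 ∧
  (∀ f g, MemHb U f → MemHb U g → φ (f + g) = φ f + φ g) ∧
  (∀ (c : ℂ) (f), MemHb U f → φ (c • f) = c * φ f) ∧
  (∀ f g, MemHb U f → MemHb U g → φ (f * g) = φ f * φ g) ∧
  ∃ B : Set E, UBounded U B ∧
    ∀ f, MemHb U f → ∀ C : ℝ, (∀ x ∈ B, ‖f x‖ ≤ C) → ‖φ f‖ ≤ C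

/-- `U` is `H_b(U)`-convex. -/
def HbConvex (U : Set E) : Prop :=
  ∀ A : Set E, UBounded U A →
    UBounded U {x ∈ U | ∀ f, MemHb U f → ∀ C : ℝ, (∀ a ∈ A, ‖f a‖ ≤ C) → ‖f x‖ ≤ C}

/-- Continuous polynomials are dense in `H_b(U)`. -/
def PolysDense (U : Set E) : Prop :=
  ∀ f, MemHb U f → ∀ A : Set E, UBounded U A → ∀ ε > 0,
    ∃ P : E → ℂ, IsContPoly P ∧ ∀ x ∈ A, ‖f x - P x‖ ≤ ε

lemma IsContPoly.comp_smul {E : Type*} [NormedAddCommGroup E] [NormedSpace ℂ E] {P : E → ℂ}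
    (hP : IsContPoly P) (c : ℂ) : IsContPoly fun x => P (c • x) := by
  obtain ⟨N, Q, hQ, hPQ⟩ := hP
  refine ⟨N, fun k x => Q k (c • x), fun k => ?_, fun x => hPQ _⟩
  obtain ⟨M, hM⟩ := hQ k
  exact ⟨M.compContinuousLinearMap fun _ => c • ContinuousLinearMap.id ℂ E, fun x => by
    simp [hM, ContinuousMultilinearMap.compContinuousLinearMap_apply]⟩

lemma polyHull_mono {E : Type*} [NormedAddCommGroup E] [NormedSpace ℂ E] {A B : Set E}
    (h : A ⊆ B) : polyHull A ⊆ polyHull B :=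
  fun _ hx P hP C hC => hx P hP C fun a ha => hC a (h ha)

lemma smul_polyHull_subset {E : Type*} [NormedAddCommGroup E] [NormedSpace ℂ E] (c : ℂ)
    (A : Set E) : c • polyHull A ⊆ polyHull (c • A) := by
  rintro _ ⟨x, hx, rfl⟩ P hP C hC
  exact hx _ (hP.comp_smul c) C fun a ha => hC _ (smul_mem_smul_set ha)

lemma smul_UhatP_subset {E : Type*} [NormedAddCommGroup E] [NormedSpace ℂ E] (c : ℂ)
    (U : Set E) : c • UhatP U ⊆ polyHull (c • U) := by
  rintro _ ⟨x, hx, rfl⟩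
  obtain ⟨m, hm⟩ := mem_iUnion.1 hx
  exact smul_polyHull_subset c U
    (smul_mem_smul_set (polyHull_mono (fun _ hy => hy.1) hm))

/-- For `U` nonempty bounded balanced open, `(n/(n+1))·Û_P ⊆ ((n/(n+1))·U)̂_P`
for every `n`, and the sets `((n/(n+1))·U)̂_P` form a fundamental system of `Û_P`-bounded
sets. -/
theorem stmt_10 {E : Type*} [NormedAddCommGroup E] [NormedSpace ℂ E] [CompleteSpace E]
    (U : Set E) (hU : IsOpen U) (hne : U.Nonempty) (hbal : Balanced ℂ U)
    (hbd : Bornology.IsBounded U) :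
    (∀ n : ℕ, ((n : ℂ) / ((n : ℂ) + 1)) • UhatP U ⊆ polyHull (((n : ℂ) / ((n : ℂ) + 1)) • U)) ∧
    ∀ A : Set E, UBounded (UhatP U) A →
      ∃ n : ℕ, A ⊆ polyHull (((n : ℂ) / ((n : ℂ) + 1)) • U) := by
  refine ⟨fun n => smul_UhatP_subset _ U, ?_⟩
  rintro A ⟨-, hA, d, hd, hball⟩
  obtain ⟨R, hR⟩ := hA.exists_norm_le
  obtain ⟨k, hk⟩ := exists_nat_gt (R / d)
  -- `k + 1` keeps the denominator nonzero.
  refine ⟨k + 1, fun a ha => smul_UhatP_subset _ U ?_⟩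
  have hn0 : ((k + 1 : ℕ) : ℂ) ≠ 0 := Nat.cast_ne_zero.2 k.succ_ne_zero
  have hn1 : ((k + 1 : ℕ) : ℂ) + 1 ≠ 0 := by exact_mod_cast (k + 1).succ_ne_zero
  have hnpos : (0 : ℝ) < ((k + 1 : ℕ) : ℝ) := by positivity
  set n := k + 1
  refine ⟨(((n : ℂ) + 1) / n) • a, hball a ha ?_, ?_⟩
  · have hdiff : (((n : ℂ) + 1) / n) • a - a = (n : ℂ)⁻¹ • a := by
      rw [sub_eq_iff_eq_add, add_div, div_self hn0, add_smul, one_smul, one_div, add_comm]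
    rw [mem_ball, dist_eq_norm, hdiff, norm_smul, norm_inv, Complex.norm_natCast,
      inv_mul_lt_iff₀ hnpos]
    have hRk : R < k * d := (div_lt_iff₀ hd).1 hk
    have hn : (n : ℝ) = k + 1 := by simp [n]
    rw [hn]
    linarith [hR a ha]
  · change ((n : ℂ) / ((n : ℂ) + 1)) • (((n : ℂ) + 1) / n) • a = a
    rw [smul_smul, div_mul_div_cancel₀ hn1, div_self hn0, one_smul]
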